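/- Let K = ℚ(θ) be a sextic number field generated by a root θ of a monic irreducible trinomial F(x) = x^6 + a x^m + b ∈ ℤ[x] with 1 ≤ m ≤ 5, where a ≡ 0 (mod 9) and b ≡ −1 (mod 9). Then there exist at least four distinct prime ideals of ℤ_K lying above 3 with residue degree 1. -/

import Mathlib

open Polynomial NumberField

/-!
Since `F ≡ x⁶ - 1 (mod 9)`, the characteristic polynomial of `y = θ - s`, for `s = ±1`, has
constant coefficient `3²d` and next coefficients `3e` and `3e₂` with `3 ∤ e`: its Newton polygon
at `3` has a side of slope at least `1` and one of slope `1/2`. To see the corresponding primes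
without completing, write Cayley–Hamilton as `3²d + 3ey + (3e₂ + gy)y² = 0`. Then `w = -3d/y` is a
root of a monic quadratic, hence integral, and the coefficients `3²d` and `3e` show that its trace
is `e`. An element whose trace is prime to `3` lies outside some prime above `3`. Applied to `w`,
this gives a prime `P` containing `y` but not `w`; applied to `w` corrected by an approximate
idempotent, it gives a prime `Q` containing both `y` and `w`, where `3(w - e - e₂y) = gy²` forces
`3 ∈ Q²`. The two signs give four primes whose ramification indices sum to at least
`1 + 1 + 2 + 2 = 6 = [K : ℚ]`, so by `∑ e(P) f(P) = 6` every residue degree is `1`.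
-/

section CharacteristicPolynomial

variable {R n : Type*} [CommRing R] [Fintype n] [DecidableEq n]

theorem charpoly_coeff_one_eq_of_isUnit {A : Matrix n n R} (hA : IsUnit A) :
    A.charpoly.coeff 1 = -(A.charpoly.coeff 0 * A⁻¹.trace) := by
  have hrev := A⁻¹.charpoly_inv (A.isUnit_nonsing_inv_iff.mpr hA)
  rw [A.nonsing_inv_nonsing_inv ((A.isUnit_iff_isUnit_det).mp hA),
    show (-1 : R[X]) = C (-1) by simp, ← C_pow, ← C_mul] at hrev
  rw [hrev, coeff_C_mul, coeff_C_mul, coeff_zero_eq_eval_zero, Matrix.eval_charpolyRev,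
    Matrix.coeff_charpolyRev_eq_neg_trace, mul_one, mul_neg]

theorem mul_charpoly_coeff_one_eq_of_mul_eq_scalar [IsDomain R] {A B : Matrix n n R} {c : R}
    (hA : A.det ≠ 0) (hAB : A * B = Matrix.scalar n c) :
    c * A.charpoly.coeff 1 = -(A.charpoly.coeff 0 * B.trace) := by
  let φ := algebraMap R (FractionRing R)
  have hφ : Function.Injective φ := IsFractionRing.injective R (FractionRing R)
  have hdet : IsUnit (φ.mapMatrix A).det := by
    rw [← RingHom.map_det, isUnit_iff_ne_zero]
    exact (map_ne_zero_iff φ hφ).mpr hA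
  have hB : φ.mapMatrix B = φ c • (φ.mapMatrix A)⁻¹ := by
    rw [← Matrix.nonsing_inv_mul_cancel_left (φ.mapMatrix A) (φ.mapMatrix B) hdet, ← map_mul, hAB]
    simp [Matrix.smul_eq_mul_diagonal, Matrix.diagonal_map]
  have hone := charpoly_coeff_one_eq_of_isUnit ((Matrix.isUnit_iff_isUnit_det _).mpr hdet)
  have htrace : φ B.trace = φ c * (φ.mapMatrix A)⁻¹.trace := by
    rw [AddMonoidHom.map_trace, ← RingHom.mapMatrix_apply, hB, Matrix.trace_smul, smul_eq_mul]
  apply hφ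
  rw [RingHom.mapMatrix_apply, Matrix.charpoly_map, coeff_map, coeff_map] at hone
  rw [map_mul, hone, map_neg, map_mul, htrace, RingHom.mapMatrix_apply]
  ring

variable {S : Type*} [CommRing S] [Algebra R S] [Module.Free R S] [Module.Finite R S]

theorem charpoly_lmul_eq_charpoly_leftMulMatrix (b : Module.Basis n R S) (x : S) :
    (Algebra.lmul R S x).charpoly = (Algebra.leftMulMatrix b x).charpoly :=
  (LinearMap.charpoly_toMatrix _ b).symm

theorem charpoly_lmul_sub_algebraMap (x : S) (r : R) :
    (Algebra.lmul R S (x - algebraMap R S r)).charpoly =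
      taylor r (Algebra.lmul R S x).charpoly := by
  classical
  rw [charpoly_lmul_eq_charpoly_leftMulMatrix (Module.Free.chooseBasis R S),
    charpoly_lmul_eq_charpoly_leftMulMatrix (Module.Free.chooseBasis R S), map_sub,
    AlgHom.commutes]
  exact Matrix.charpoly_sub_scalar _ r

theorem trace_eq_neg_charpoly_lmul_nextCoeff (x : S) :
    Algebra.trace R S x = -(Algebra.lmul R S x).charpoly.nextCoeff := by
  classical
  rw [charpoly_lmul_eq_charpoly_leftMulMatrix (Module.Free.chooseBasis R S),
    Algebra.trace_eq_matrix_trace (Module.Free.chooseBasis R S),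
    Matrix.trace_eq_neg_charpoly_nextCoeff]

theorem mul_charpoly_lmul_coeff_one_eq_of_mul_eq [IsDomain R] [IsDomain S] {x w : S} {c : R}
    (hx : x ≠ 0) (hxw : x * w = algebraMap R S c) :
    c * (Algebra.lmul R S x).charpoly.coeff 1 =
      -((Algebra.lmul R S x).charpoly.coeff 0 * Algebra.trace R S w) := by
  classical
  let b := Module.Free.chooseBasis R S
  rw [charpoly_lmul_eq_charpoly_leftMulMatrix b, Algebra.trace_eq_matrix_trace b]
  apply mul_charpoly_coeff_one_eq_of_mul_eq_scalar
  · rw [← Algebra.norm_eq_matrix_det]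
    exact Algebra.norm_ne_zero_iff.mpr hx
  · rw [← map_mul, hxw, AlgHom.commutes]
    rfl

theorem charpoly_lmul_eq_of_irreducible [IsDomain R] [IsIntegrallyClosed R] [IsDomain S]
    {x : S} {f : R[X]} (hf : f.Monic) (hirr : Irreducible f) (hx : aeval x f = 0)
    (hdeg : f.natDegree = Module.finrank R S) :
    (Algebra.lmul R S x).charpoly = f := by
  have hmin : minpoly R x = f := by
    have hint : IsIntegral R x := Algebra.IsIntegral.isIntegral x
    exact eq_of_monic_of_associated (minpoly.monic hint) hf
      ((minpoly.irreducible hint).associated_of_dvd hirr (minpoly.isIntegrallyClosed_dvd hint hx))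
  refine eq_of_monic_of_dvd_of_natDegree_le hf (LinearMap.charpoly_monic _) ?_ ?_
  · rw [← hmin]
    exact minpoly.isIntegrallyClosed_dvd (Algebra.IsIntegral.isIntegral x)
      (Algebra.aeval_self_charpoly_lmul x)
  · rw [LinearMap.charpoly_natDegree, hdeg]

theorem finrank_eq_of_charpoly_lmul_map_eq {T : Type*} [CommRing T] [Nontrivial T] {φ : R →+* T}
    {x : S} {k : ℕ} (hx : (Algebra.lmul R S x).charpoly.map φ = X ^ k - 1) :
    Module.finrank R S = k := by
  have := φ.domain_nontrivial
  rw [← LinearMap.charpoly_natDegree (Algebra.lmul R S x),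
    ← (LinearMap.charpoly_monic _).natDegree_map φ, hx, ← C_1, natDegree_X_pow_sub_C]

theorem map_trace_eq_zero_of_charpoly_lmul_map_eq {T : Type*} [CommRing T] [Nontrivial T]
    {φ : R →+* T} {x : S} {k : ℕ} (hk : 1 < k)
    (hx : (Algebra.lmul R S x).charpoly.map φ = X ^ k - 1) : φ (Algebra.trace R S x) = 0 := by
  have := φ.domain_nontrivial
  have hdeg : (Algebra.lmul R S x).charpoly.natDegree = k := by
    rw [LinearMap.charpoly_natDegree, finrank_eq_of_charpoly_lmul_map_eq hx]
  rw [trace_eq_neg_charpoly_lmul_nextCoeff, nextCoeff_of_natDegree_pos (by lia), hdeg, map_neg,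
    ← coeff_map, hx, coeff_sub, coeff_X_pow, coeff_one, if_neg (by lia), if_neg (by lia), sub_zero,
    neg_zero]

end CharacteristicPolynomial

theorem exists_isMaximal_notMem_of_trace_notMem {R S : Type*} [CommRing R] [IsDedekindDomain R]
    [CommRing S] [IsDomain S] [IsIntegrallyClosed S] [Algebra R S] [Module.Free R S]
    [Module.Finite R S] {p : Ideal R} [p.IsMaximal] {x : S} (hx : Algebra.trace R S x ∉ p) :
    ∃ P : Ideal S, P.IsMaximal ∧ Ideal.LiesOver P p ∧ x ∉ P := by
  contrapose! hx
  have hrad : x ∈ (p.map (algebraMap R S)).radical := by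
    rw [Ideal.radical_eq_sInf, Submodule.mem_sInf]
    rintro P ⟨hpP, hP⟩
    have hover : Ideal.LiesOver P p :=
      ⟨Ideal.IsMaximal.eq_of_le ‹_› (Ideal.IsPrime.under R P).ne_top
        (Ideal.map_le_iff_le_comap.mp hpP)⟩
    exact hx P (Ideal.IsMaximal.of_liesOver_isMaximal P p) hover
  have hnil : IsNilpotent (Ideal.Quotient.mk (p.map (algebraMap R S)) x) := by
    obtain ⟨k, hk⟩ := hrad
    exact ⟨k, by rw [← map_pow, Ideal.Quotient.eq_zero_iff_mem]; exact hk⟩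
  have htrace := (Algebra.isNilpotent_trace_of_isNilpotent (R := R ⧸ p) hnil).eq_zero
  rwa [Algebra.trace_quotient_eq_of_isDedekindDomain, Ideal.Quotient.eq_zero_iff_mem,
    Algebra.intTrace_eq_trace] at htrace

theorem exists_mul_eq_of_quadratic {A : Type*} [CommRing A] [IsDomain A] [IsIntegrallyClosed A]
    {p d e g y : A} (hp : p ≠ 0) (h : p ^ 2 * d + p * e * y + g * y ^ 2 = 0) :
    ∃ w, p * w = p * e + g * y ∧ y * w = -(p * d) ∧ w * (w - e) = -(g * d) := by
  let φ := algebraMap A (FractionRing A)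
  have hφ : Function.Injective φ := IsFractionRing.injective A (FractionRing A)
  have hφp : φ p ≠ 0 := (map_ne_zero_iff φ hφ).mpr hp
  obtain ⟨z, hz⟩ : ∃ z, φ z = φ (g * y) / φ p := by
    refine IsIntegrallyClosed.isIntegral_iff.mp
      ⟨X ^ 2 + C e * X + C (g * d), by monicity!, ?_⟩
    have hφh := congrArg φ h
    simp only [map_add, map_mul, map_pow, map_zero] at hφh
    simp only [eval₂_add, eval₂_mul, eval₂_pow, eval₂_X, eval₂_C, map_mul]
    change _ + φ e * _ + φ g * φ d = 0
    field_simp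
    linear_combination φ g * hφh
  have hpz : p * z = g * y := hφ (by rw [map_mul, hz, mul_div_cancel₀ _ hφp])
  refine ⟨e + z, by rw [mul_add, hpz], mul_left_cancel₀ hp ?_,
    mul_left_cancel₀ (pow_ne_zero 2 hp) ?_⟩
  · linear_combination y * hpz + h
  · linear_combination (p * e + p * z + g * y) * hpz + g * h

theorem mem_sq_of_mul_eq {A : Type*} [CommRing A] {Q : Ideal A} [Q.IsMaximal] {p t g y : A}
    (hy : y ∈ Q) (ht : t ∉ Q) (h : t * p = g * y ^ 2) : p ∈ Q ^ 2 :=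
  (Ideal.IsMaximal.mul_mem_pow Q
    (h ▸ Ideal.mul_mem_left _ g (Ideal.pow_mem_pow hy 2))).resolve_left ht

theorem card_quotient_eq_of_finrank_le_sum {S ι : Type*} [CommRing S] [IsDedekindDomain S]
    [Module.Free ℤ S] [Module.Finite ℤ S] [Fintype ι] {p : ℕ} (hp : p.Prime)
    {P : ι → Ideal S} (hP : Function.Injective P) (hmax : ∀ i, (P i).IsMaximal) {e : ι → ℕ}
    (he : ∀ i, e i ≠ 0) (hmem : ∀ i, (p : S) ∈ P i ^ e i)
    (hsum : Module.finrank ℤ S ≤ ∑ i, e i) (i : ι) : Nat.card (S ⧸ P i) = p := by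
  have hdvd : ∏ j, P j ^ e j ∣ Ideal.span {(p : S)} :=
    Fintype.prod_dvd_of_coprime
      (fun j k hjk ↦ ((Ideal.isCoprime_iff_sup_eq.mpr
        ((hmax j).coprime_of_ne (hmax k) (hP.ne hjk))).pow))
      fun j ↦ Ideal.dvd_span_singleton.mpr (hmem j)
  have hnorm : ∏ j, Ideal.absNorm (P j) ^ e j ∣ p ^ Module.finrank ℤ S := by
    simpa only [map_prod, map_pow, Ideal.absNorm_span_natCast] using map_dvd Ideal.absNorm hdvd
  have hpow : ∀ j, ∃ f, 1 ≤ f ∧ Ideal.absNorm (P j) = p ^ f := by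
    intro j
    obtain ⟨f, -, hf⟩ := (Nat.dvd_prime_pow hp).mp
      ((dvd_pow_self _ (he j)).trans ((Finset.dvd_prod_of_mem _ (Finset.mem_univ j)).trans hnorm))
    refine ⟨f, Nat.one_le_iff_ne_zero.mpr ?_, hf⟩
    rintro rfl
    exact (hmax j).ne_top (Ideal.absNorm_eq_one_iff.mp (by simpa using hf))
  choose f hf hPf using hpow
  have hle : ∑ j, f j * e j ≤ ∑ j, e j := by
    simp only [hPf, ← pow_mul, Finset.prod_pow_eq_pow_sum] at hnorm
    exact ((Nat.pow_dvd_pow_iff_le_right hp.one_lt).mp hnorm).trans hsum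
  have hfi : f i * e i = e i := by
    refine ((Finset.sum_eq_sum_iff_of_le fun j _ ↦ ?_).mp (le_antisymm ?_ hle) i
      (Finset.mem_univ i)).symm
    · exact Nat.le_mul_of_pos_left _ (hf j)
    · exact Finset.sum_le_sum fun j _ ↦ Nat.le_mul_of_pos_left _ (hf j)
  have : f i = 1 := by simpa [he i] using hfi
  rw [← Submodule.cardQuot_apply, ← Ideal.absNorm_apply, hPf, this, pow_one]

theorem exists_aeval_eq_coeff_add {R S : Type*} [CommRing R] [CommRing S] [Algebra R S]
    (f : R[X]) (y : S) :
    ∃ g, aeval y f = algebraMap R S (f.coeff 0) + algebraMap R S (f.coeff 1) * y +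
      (algebraMap R S (f.coeff 2) + g * y) * y ^ 2 := by
  refine ⟨aeval y f.divX.divX.divX, ?_⟩
  have hdivX (h : R[X]) : aeval y h = aeval y h.divX * y + algebraMap R S (h.coeff 0) := by
    conv_lhs => rw [← divX_mul_X_add h]
    simp
  rw [hdivX f, hdivX f.divX, hdivX f.divX.divX]
  simp only [coeff_divX]
  ring

section PrimesAbovePrimeElement

variable {R S : Type*} [CommRing R] [CommRing S] [IsDomain S]
  [IsIntegrallyClosed S] [Algebra R S] [Module.Free R S] [Module.Finite R S]

theorem exists_mul_eq_and_trace_eq_of_charpoly_lmul_coeff_eq [IsDomain R] {π d e e₂ : R} {y : S}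
    (hπ : π ≠ 0) (hy : y ≠ 0)
    (h₀ : (Algebra.lmul R S y).charpoly.coeff 0 = π ^ 2 * d)
    (h₁ : (Algebra.lmul R S y).charpoly.coeff 1 = π * e)
    (h₂ : (Algebra.lmul R S y).charpoly.coeff 2 = π * e₂) :
    ∃ w g : S, y * w = algebraMap R S (-(π * d)) ∧
      (w - algebraMap R S e - algebraMap R S e₂ * y) * algebraMap R S π = g * y ^ 2 ∧
      w * (w - algebraMap R S e) =
        -((algebraMap R S π * algebraMap R S e₂ + g * y) * algebraMap R S d) ∧
      Algebra.trace R S w = e := by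
  obtain ⟨g, hg⟩ := exists_aeval_eq_coeff_add (Algebra.lmul R S y).charpoly y
  rw [Algebra.aeval_self_charpoly_lmul, h₀, h₁, h₂] at hg
  simp only [map_mul, map_pow] at hg
  have hπS : algebraMap R S π ≠ 0 := by
    simpa using hπ
  obtain ⟨w, hπw, hyw, hww⟩ := exists_mul_eq_of_quadratic hπS hg.symm
  have hyw' : y * w = algebraMap R S (-(π * d)) := by rw [hyw, map_neg, map_mul]
  refine ⟨w, g, hyw', by linear_combination hπw, hww, ?_⟩
  have hnorm := mul_charpoly_lmul_coeff_one_eq_of_mul_eq hy hyw'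
  have hd : π ^ 2 * d ≠ 0 := by
    rw [← h₀]
    intro h
    refine Algebra.norm_ne_zero_iff (R := R).mpr hy ?_
    change LinearMap.det (Algebra.lmul R S y) = 0
    rw [LinearMap.det_eq_sign_charpoly_coeff, h, mul_zero]
  apply mul_left_cancel₀ hd
  rw [h₀, h₁] at hnorm
  linear_combination hnorm

-- `c` plays the role of the idempotent of `S / π S` supported on the primes containing `y`: a prime
-- missing `w - e * c` contains `y`, and then, as `w * (w - e)` lies in it, also `w`.
theorem exists_isMaximal_pair_of_charpoly_lmul_coeff_eq [IsDedekindDomain R] {π d e e₂ : R}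
    [(Ideal.span {π}).IsMaximal] {y c : S} (hπ : π ≠ 0) (hy : y ≠ 0)
    (h₀ : (Algebra.lmul R S y).charpoly.coeff 0 = π ^ 2 * d)
    (h₁ : (Algebra.lmul R S y).charpoly.coeff 1 = π * e)
    (h₂ : (Algebra.lmul R S y).charpoly.coeff 2 = π * e₂)
    (he : e ∉ Ideal.span {π}) (hc : Algebra.trace R S c ∈ Ideal.span {π})
    (hc₁ : ∀ P : Ideal S, P.IsMaximal → P.LiesOver (Ideal.span {π}) → y ∈ P → c - 1 ∈ P)
    (hc₀ : ∀ P : Ideal S, P.IsMaximal → P.LiesOver (Ideal.span {π}) → y ∉ P → c ∈ P) :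
    ∃ P Q : Ideal S, P.IsMaximal ∧ Q.IsMaximal ∧ P ≠ Q ∧ y ∈ P ∧ y ∈ Q ∧
      algebraMap R S π ∈ P ∧ algebraMap R S π ∈ Q ^ 2 := by
  obtain ⟨w, g, hyw, hπw, hww, htr⟩ :=
    exists_mul_eq_and_trace_eq_of_charpoly_lmul_coeff_eq hπ hy h₀ h₁ h₂
  have hπ_mem (P : Ideal S) (hP : P.LiesOver (Ideal.span {π})) : algebraMap R S π ∈ P :=
    (Ideal.mem_of_liesOver P _ π).mp (Ideal.mem_span_singleton_self π)
  have hyw_mem (P : Ideal S) (hP : P.LiesOver (Ideal.span {π})) : y * w ∈ P := by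
    rw [hyw, ← Ideal.mem_of_liesOver P (Ideal.span {π})]
    exact neg_mem (Ideal.mul_mem_right _ _ (Ideal.mem_span_singleton_self π))
  obtain ⟨P, hP, hPπ, hwP⟩ : ∃ P : Ideal S, P.IsMaximal ∧ P.LiesOver (Ideal.span {π}) ∧ w ∉ P :=
    exists_isMaximal_notMem_of_trace_notMem (by rwa [htr])
  obtain ⟨Q, hQ, hQπ, huQ⟩ : ∃ Q : Ideal S, Q.IsMaximal ∧ Q.LiesOver (Ideal.span {π}) ∧
      w - e • c ∉ Q :=
    exists_isMaximal_notMem_of_trace_notMem (by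
      rw [map_sub, map_smul, htr, smul_eq_mul]
      exact fun h ↦ he (by simpa using add_mem h (Ideal.mul_mem_left _ e hc)))
  rw [Algebra.smul_def] at huQ
  have hyQ : y ∈ Q := by
    by_contra hy
    exact huQ (sub_mem ((hQ.isPrime.mem_or_mem (hyw_mem Q hQπ)).resolve_left hy)
      (Ideal.mul_mem_left _ _ (hc₀ Q hQ hQπ hy)))
  have hwQ : w ∈ Q := by
    have hmem : w * (w - algebraMap R S e) ∈ Q := by
      rw [hww]
      exact neg_mem (Ideal.mul_mem_right _ _
        (add_mem (Ideal.mul_mem_right _ _ (hπ_mem Q hQπ)) (Ideal.mul_mem_left _ _ hyQ)))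
    refine (hQ.isPrime.mem_or_mem hmem).resolve_right fun h ↦ huQ ?_
    convert sub_mem h (Ideal.mul_mem_left _ (algebraMap R S e) (hc₁ Q hQ hQπ hyQ)) using 1
    ring
  refine ⟨P, Q, hP, hQ, fun h ↦ hwP (h ▸ hwQ),
    (hP.isPrime.mem_or_mem (hyw_mem P hPπ)).resolve_right hwP, hyQ, hπ_mem P hPπ,
    mem_sq_of_mul_eq hyQ (fun h ↦ he ?_) hπw⟩
  rw [Ideal.mem_of_liesOver Q (Ideal.span {π})]
  convert sub_mem (sub_mem hwQ h) (Ideal.mul_mem_left _ (algebraMap R S e₂) hyQ) using 1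
  ring

end PrimesAbovePrimeElement

theorem exists_eq_X_pow_sub_one_add_of_map_eq {n k : ℕ} {F : ℤ[X]}
    (hF : F.map (Int.castRingHom (ZMod n)) = X ^ k - 1) :
    ∃ G, F = X ^ k - 1 + C (n : ℤ) * G := by
  obtain ⟨G, hG⟩ : C (n : ℤ) ∣ F - (X ^ k - 1) := by
    refine (C_dvd_iff_dvd_coeff _ _).mpr fun i ↦ ?_
    rw [← ZMod.intCast_zmod_eq_zero_iff_dvd, ← eq_intCast (Int.castRingHom (ZMod n)), ← coeff_map,
      Polynomial.map_sub, hF, Polynomial.map_sub, Polynomial.map_pow, map_X, Polynomial.map_one,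
      sub_self, coeff_zero]
  exact ⟨G, by rw [← hG, add_sub_cancel]⟩

theorem exists_taylor_coeff_eq_of_map_eq {F : ℤ[X]}
    (hF : F.map (Int.castRingHom (ZMod 9)) = X ^ 6 - 1) (s : ℤˣ) :
    ∃ d e e₂ : ℤ, (taylor (s : ℤ) F).coeff 0 = 3 ^ 2 * d ∧ (taylor (s : ℤ) F).coeff 1 = 3 * e ∧
      (taylor (s : ℤ) F).coeff 2 = 3 * e₂ ∧ ¬ 3 ∣ e := by
  obtain ⟨G, hG⟩ := exists_eq_X_pow_sub_one_add_of_map_eq hF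
  have hcoeff (k : ℕ) : (taylor (s : ℤ) F).coeff k =
      (s : ℤ) ^ (6 - k) * (Nat.choose 6 k) - (1 : ℤ[X]).coeff k +
        9 * (taylor (s : ℤ) G).coeff k := by
    rw [hG, map_add, map_sub, taylor_mul, taylor_C, taylor_X_pow, taylor_one, coeff_add, coeff_sub,
      coeff_C_mul, coeff_X_add_C_pow, C_1, Nat.cast_ofNat]
  refine ⟨(taylor (s : ℤ) G).coeff 0, 2 * s + 3 * (taylor (s : ℤ) G).coeff 1,
    5 + 3 * (taylor (s : ℤ) G).coeff 2, ?_, ?_, ?_, ?_⟩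
  · rcases Int.units_eq_one_or s with rfl | rfl <;> simp only [hcoeff, coeff_one] <;> norm_num
  · rcases Int.units_eq_one_or s with rfl | rfl <;>
      simp only [hcoeff, coeff_one] <;> norm_num <;> ring
  · rcases Int.units_eq_one_or s with rfl | rfl <;>
      simp only [hcoeff, coeff_one] <;> norm_num [Nat.choose] <;> ring
  · rcases Int.units_eq_one_or s with rfl | rfl <;> norm_num

section ModNine

variable {S : Type*} [CommRing S] [Module.Free ℤ S] [Module.Finite ℤ S] {θ : S}

theorem add_unit_mem_of_sub_unit_notMem
    (hχ : (Algebra.lmul ℤ S θ).charpoly.map (Int.castRingHom (ZMod 9)) = X ^ 6 - 1) (s : ℤˣ)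
    {P : Ideal S} [hP : P.IsPrime] (h3 : (3 : S) ∈ P) (hs : θ - algebraMap ℤ S s ∉ P) :
    θ + algebraMap ℤ S s ∈ P := by
  obtain ⟨G, hG⟩ := exists_eq_X_pow_sub_one_add_of_map_eq hχ
  have hθ : θ ^ 6 - 1 + 9 * aeval θ G = 0 := by
    have h := Algebra.aeval_self_charpoly_lmul (R := ℤ) θ
    rw [hG, map_add, map_mul, aeval_C] at h
    simpa using h
  have hsq : algebraMap ℤ S s ^ 2 = 1 := by
    rw [sq, ← map_mul, Int.units_coe_mul_self, map_one]
  have hcube : ((θ - algebraMap ℤ S s) * (θ + algebraMap ℤ S s)) ^ 3 ∈ P := by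
    convert Ideal.mul_mem_left P (θ ^ 2 - θ ^ 4 - 3 * aeval θ G) h3 using 1
    rw [mul_comm, ← sq_sub_sq, hsq]
    linear_combination hθ
  exact (hP.mem_or_mem (hP.mem_of_pow_mem 3 hcube)).resolve_left hs

theorem exists_isMaximal_pair_of_charpoly_lmul_map_eq [IsDomain S] [IsIntegrallyClosed S]
    (hχ : (Algebra.lmul ℤ S θ).charpoly.map (Int.castRingHom (ZMod 9)) = X ^ 6 - 1) (s : ℤˣ) :
    ∃ P Q : Ideal S, P.IsMaximal ∧ Q.IsMaximal ∧ P ≠ Q ∧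
      θ - algebraMap ℤ S s ∈ P ∧ θ - algebraMap ℤ S s ∈ Q ∧ (3 : S) ∈ P ∧ (3 : S) ∈ Q ^ 2 := by
  have : Fact (1 < 9) := ⟨by norm_num⟩
  have : (Ideal.span {(3 : ℤ)}).IsMaximal :=
    PrincipalIdealRing.isMaximal_of_irreducible Int.prime_three.irreducible
  have htr : ∀ r : ℤ, Algebra.trace ℤ S (algebraMap ℤ S r) = 6 * r := fun r ↦ by
    rw [Algebra.trace_algebraMap, finrank_eq_of_charpoly_lmul_map_eq hχ, nsmul_eq_mul,
      Nat.cast_ofNat]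
  have hθ : 9 ∣ Algebra.trace ℤ S θ :=
    (ZMod.intCast_zmod_eq_zero_iff_dvd _ 9).mp
      (map_trace_eq_zero_of_charpoly_lmul_map_eq (by norm_num) hχ)
  obtain ⟨d, e, e₂, h₀, h₁, h₂, he⟩ := exists_taylor_coeff_eq_of_map_eq hχ s
  rw [← charpoly_lmul_sub_algebraMap] at h₀ h₁ h₂
  have hy : θ - algebraMap ℤ S s ≠ 0 := by
    intro h
    rw [sub_eq_zero.mp h, htr] at hθ
    rcases Int.units_eq_one_or s with rfl | rfl <;> norm_num at hθ
  have hmem3 (P : Ideal S) (hP : P.LiesOver (Ideal.span {(3 : ℤ)})) : (3 : S) ∈ P := by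
    simpa using (Ideal.mem_of_liesOver P _ (3 : ℤ)).mp (Ideal.mem_span_singleton_self 3)
  have hs : algebraMap ℤ S s * algebraMap ℤ S s = 1 := by
    rw [← map_mul, Int.units_coe_mul_self, map_one]
  -- `2 - s * θ` equals both `1 - s * (θ - s)` and `3 - s * (θ + s)`.
  have hpair := exists_isMaximal_pair_of_charpoly_lmul_coeff_eq
    (c := 2 - algebraMap ℤ S s * θ) three_ne_zero hy h₀ h₁ h₂
    (by rwa [Ideal.mem_span_singleton]) ?_ ?_ ?_
  · simpa only [map_ofNat] using hpair
  · rw [Ideal.mem_span_singleton, map_sub, ← Algebra.smul_def, map_smul, smul_eq_mul,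
      ← map_ofNat (algebraMap ℤ S) 2, htr]
    exact dvd_sub (by norm_num) (((by norm_num : (3 : ℤ) ∣ 9).trans hθ).mul_left _)
  · intro P _ _ hyP
    convert Ideal.mul_mem_left P (-algebraMap ℤ S s) hyP using 1
    linear_combination -hs
  · intro P hP hPover hyP
    convert sub_mem (hmem3 P hPover) (Ideal.mul_mem_left P (algebraMap ℤ S s)
      (add_unit_mem_of_sub_unit_notMem hχ s (hmem3 P hPover) hyP)) using 1
    linear_combination hs

end ModNine

theorem eq_of_sub_unit_mem {S : Type*} [CommRing S] {θ : S} {s t : ℤˣ} {P : Ideal S}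
    (hP : P ≠ ⊤) (h3 : (3 : S) ∈ P) (hs : θ - algebraMap ℤ S s ∈ P)
    (ht : θ - algebraMap ℤ S t ∈ P) : s = t := by
  by_contra hst
  have h2 : algebraMap ℤ S s - algebraMap ℤ S t ∈ P := by
    simpa using sub_mem ht hs
  refine hP ((Ideal.eq_top_iff_one P).mpr ?_)
  rw [Int.units_ne_iff_eq_neg.mp hst] at h2
  rcases Int.units_eq_one_or t with rfl | rfl
  · convert add_mem h3 h2 using 1
    rw [Units.val_neg, Units.val_one, map_neg, map_one]
    ring
  · convert sub_mem h3 h2 using 1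
    rw [neg_neg, Units.val_neg, Units.val_one, map_neg, map_one]
    ring

theorem four_primes_above_three_of_sextic_general {S : Type*} [CommRing S] [IsDedekindDomain S]
    [Module.Free ℤ S] [Module.Finite ℤ S] (θ : S)
    (hχ : (Algebra.lmul ℤ S θ).charpoly.map (Int.castRingHom (ZMod 9)) = X ^ 6 - 1) :
    ∃ P₁ P₂ P₃ P₄ : Ideal S,
      P₁ ≠ P₂ ∧ P₁ ≠ P₃ ∧ P₁ ≠ P₄ ∧ P₂ ≠ P₃ ∧ P₂ ≠ P₄ ∧ P₃ ≠ P₄ ∧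
      P₁.IsMaximal ∧ (3 : S) ∈ P₁ ∧ Nat.card (S ⧸ P₁) = 3 ∧
      P₂.IsMaximal ∧ (3 : S) ∈ P₂ ∧ Nat.card (S ⧸ P₂) = 3 ∧
      P₃.IsMaximal ∧ (3 : S) ∈ P₃ ∧ Nat.card (S ⧸ P₃) = 3 ∧
      P₄.IsMaximal ∧ (3 : S) ∈ P₄ ∧ Nat.card (S ⧸ P₄) = 3 := by
  have : Fact (1 < 9) := ⟨by norm_num⟩
  choose P Q hP hQ hPQ hθP hθQ h3P h3Q using exists_isMaximal_pair_of_charpoly_lmul_map_eq hχ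
  have h3Q' (s : ℤˣ) : (3 : S) ∈ Q s := Ideal.pow_le_self two_ne_zero (h3Q s)
  have hinj : Function.Injective (Sum.elim P Q) := by
    refine Function.Injective.sumElim (fun s t h ↦ ?_) (fun s t h ↦ ?_) fun s t h ↦ ?_
    · exact eq_of_sub_unit_mem (hP s).ne_top (h3P s) (hθP s) (h ▸ hθP t)
    · exact eq_of_sub_unit_mem (hQ s).ne_top (h3Q' s) (hθQ s) (h ▸ hθQ t)
    · obtain rfl := eq_of_sub_unit_mem (hP s).ne_top (h3P s) (hθP s) (h ▸ hθQ t)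
      exact hPQ s h
  have hcard := card_quotient_eq_of_finrank_le_sum Nat.prime_three hinj
    (e := Sum.elim (fun _ ↦ 1) fun _ ↦ 2) (by rintro (s | s); exacts [hP s, hQ s])
    (by rintro (_ | _) <;> simp) (by rintro (s | s); exacts [by simpa using h3P s, h3Q s])
    (by rw [finrank_eq_of_charpoly_lmul_map_eq hχ]; decide)
  exact ⟨P 1, P (-1), Q 1, Q (-1),
    hinj.ne (a₁ := .inl 1) (a₂ := .inl (-1)) (by decide), hPQ 1,
    hinj.ne (a₁ := .inl 1) (a₂ := .inr (-1)) (by decide),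
    hinj.ne (a₁ := .inl (-1)) (a₂ := .inr 1) (by decide), hPQ (-1),
    hinj.ne (a₁ := .inr 1) (a₂ := .inr (-1)) (by decide),
    hP 1, h3P 1, hcard (.inl 1), hP (-1), h3P (-1), hcard (.inl (-1)),
    hQ 1, h3Q' 1, hcard (.inr 1), hQ (-1), h3Q' (-1), hcard (.inr (-1))⟩

theorem finrank_eq_natDegree_of_adjoin_eq_top {K : Type*} [Field K] [NumberField K] {x : K}
    {F : ℤ[X]} (hF : F.Monic) (hirr : Irreducible F) (hroot : aeval x F = 0)
    (hgen : Algebra.adjoin ℚ {x} = ⊤) : Module.finrank ℚ K = F.natDegree := by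
  have hx : IsIntegral ℚ x := Algebra.IsIntegral.isIntegral x
  have hmin : F.map (algebraMap ℤ ℚ) = minpoly ℚ x :=
    minpoly.eq_of_irreducible_of_monic
      (hF.irreducible_iff_irreducible_map_fraction_map.mp hirr)
      (by rwa [aeval_map_algebraMap]) (hF.map _)
  rw [(PowerBasis.ofAdjoinEqTop hx hgen).finrank, PowerBasis.ofAdjoinEqTop_dim, ← hmin,
    hF.natDegree_map]

theorem charpoly_lmul_eq_of_adjoin_eq_top {K : Type*} [Field K] [NumberField K] {θ : 𝓞 K}
    {F : ℤ[X]} (hF : F.Monic) (hirr : Irreducible F) (hroot : aeval (θ : K) F = 0)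
    (hgen : Algebra.adjoin ℚ {(θ : K)} = ⊤) : (Algebra.lmul ℤ (𝓞 K) θ).charpoly = F := by
  refine charpoly_lmul_eq_of_irreducible hF hirr ?_ ?_
  · exact RingOfIntegers.coe_injective (by simpa [aeval_algebraMap_apply] using hroot)
  · rw [RingOfIntegers.rank, finrank_eq_natDegree_of_adjoin_eq_top hF hirr hroot hgen]

theorem monic_X_pow_add_C_mul_X_pow_add_C {R : Type*} [CommRing R] {m n : ℕ} (hmn : m < n)
    (a b : R) : (X ^ n + C a * X ^ m + C b).Monic := by
  have hdeg : (C a * X ^ m + C b).degree ≤ (m : WithBot ℕ) := by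
    compute_degree
    exact le_rfl
  rw [add_assoc]
  exact monic_X_pow_add (hdeg.trans_lt (by exact_mod_cast hmn))

theorem map_trinomial_eq_X_pow_sub_one {N : ℕ} {a b : ℤ} (ha : a ≡ 0 [ZMOD N])
    (hb : b ≡ -1 [ZMOD N]) (n m : ℕ) :
    (X ^ n + C a * X ^ m + C b).map (Int.castRingHom (ZMod N)) = X ^ n - 1 := by
  have ha' : (a : ZMod N) = 0 := by exact_mod_cast (ZMod.intCast_eq_intCast_iff a 0 N).mpr ha
  have hb' : (b : ZMod N) = -1 := by exact_mod_cast (ZMod.intCast_eq_intCast_iff b (-1) N).mpr hb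
  simp [-map_intCast, -eq_intCast, ha', hb', sub_eq_add_neg]

/-- For a sextic field `K` defined by a trinomial `x^6 + a x^m + b` with
`a ≡ 0 (mod 9)` and `b ≡ -1 (mod 9)`, there are at least four distinct prime
ideals of `ℤ_K` above `3` with residue degree `1`. -/
theorem four_primes_above_three_of_sextic
    {K : Type*} [Field K] [NumberField K] (θ : 𝓞 K)
    (m : ℕ) (hm : 1 ≤ m) (hm5 : m ≤ 5)
    (a b : ℤ)
    (F : ℤ[X]) (hF : F = X ^ 6 + C a * X ^ m + C b)
    (hirr : Irreducible F)
    (hroot : Polynomial.aeval (θ : K) F = 0)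
    (hgen : Algebra.adjoin ℚ {(θ : K)} = ⊤)
    (ha : a ≡ 0 [ZMOD 9])
    (hb : b ≡ -1 [ZMOD 9]) :
    ∃ P₁ P₂ P₃ P₄ : Ideal (𝓞 K),
      P₁ ≠ P₂ ∧ P₁ ≠ P₃ ∧ P₁ ≠ P₄ ∧ P₂ ≠ P₃ ∧ P₂ ≠ P₄ ∧ P₃ ≠ P₄ ∧
      P₁.IsMaximal ∧ (3 : 𝓞 K) ∈ P₁ ∧ Nat.card (𝓞 K ⧸ P₁) = 3 ∧
      P₂.IsMaximal ∧ (3 : 𝓞 K) ∈ P₂ ∧ Nat.card (𝓞 K ⧸ P₂) = 3 ∧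
      P₃.IsMaximal ∧ (3 : 𝓞 K) ∈ P₃ ∧ Nat.card (𝓞 K ⧸ P₃) = 3 ∧
      P₄.IsMaximal ∧ (3 : 𝓞 K) ∈ P₄ ∧ Nat.card (𝓞 K ⧸ P₄) = 3 := by
  subst hF
  exact four_primes_above_three_of_sextic_general θ (by
    rw [charpoly_lmul_eq_of_adjoin_eq_top
      (monic_X_pow_add_C_mul_X_pow_add_C (Nat.lt_succ_of_le hm5) a b) hirr hroot hgen,
      map_trinomial_eq_X_pow_sub_one ha hb])
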